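/- Let p and R be real numbers with p > 1/(3 − 2·p0_adv) and R > 0. Then there exists n₀ such that for every n ≥ n₀ and every code C ⊆ {0,1}^n with |C| ≥ 2^{Rn}, there exists a deterministic online deletion channel that deletes at most pn bits on every input and such that for every decoding function Dec from binary strings to C, the number of codewords c ∈ C with Dec(channel output on input c) ≠ c is at least |C|/10. -/

import Mathlib

/-!
Write `s = ⌊pn⌋` and `m = n - s`. It suffices to find, for some `ε ≥ 1/10`, a channel with at most
`(1 - ε)|C|` outputs on `C`, since correctly decoded codewords have distinct outputs. This is
possible for every `ε < 1/5`.

If `C` has at most `(1 - ε)|C|` prefixes of length `m`, the channel deletes the last `s` bits.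
Otherwise pick one codeword for each prefix, and keep those whose prefix has the majority bit `b`;
for one of the two choices of `b`, at least `(1 - ε)|C|/2` codewords remain. On these the channel
transmits exactly `⌈m/2⌉` copies of `b` out of the prefix. At that point it knows the codeword
while its output is still the same for all of them, and it can go on to send any subsequence of the
last `s` bits. For `q` above `p0adv`, all but fewer than `2^{Rs/2}` of these codewords can be paired
such that the suffixes in each pair share a subsequence of length `(1 - q)s`. Sending it merges the
two codewords of the pair, so that about `(1 - ε)|C|/4 > ε|C|` outputs are lost. The number of
deletions is at most `m/2 + qs ≈ ((1 - p)/2 + qp)n`, which is below `pn` when `p(3 - 2q) > 1`, and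
this holds for `q` close to `p0adv`.
-/

open scoped Classical

/-- `advGood p` : there is a rate `δ > 0` such that for infinitely many `n` there is a
code `C ⊆ {0,1}^n` of size at least `2^{δn}` in which every two distinct codewords
have longest common subsequence of length less than `(1−p)n`. -/
def advGood (p : ℝ) : Prop :=
  ∃ δ : ℝ, 0 < δ ∧ ∀ n₀ : ℕ, ∃ n ≥ n₀, ∃ C : Finset (List Bool),
    (∀ c ∈ C, c.length = n) ∧ (C.card : ℝ) ≥ 2 ^ (δ * n) ∧
    ∀ x ∈ C, ∀ y ∈ C, x ≠ y →
      ∀ z : List Bool, z.Sublist x → z.Sublist y → (z.length : ℝ) < (1 - p) * n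

/-- The zero-rate threshold for adversarial deletions. -/
noncomputable def p0adv : ℝ := sSup {p : ℝ | p ∈ Set.Icc (0 : ℝ) 1 ∧ advGood p}

/-- The output of the deterministic online deletion channel described by `f` on input
`x`: bit `x_i` is transmitted iff `f` applied to the prefix `x_1…x_i` returns `true`. -/
def onlineOutput (f : List Bool → Bool) (x : List Bool) : List Bool :=
  (List.range x.length).filterMap
    (fun i => if f (x.take (i + 1)) then some (x.getD i false) else none)

/-- The online channel `f` deletes at most `pn` bits on every input of length `n`. -/
def deletesAtMost (f : List Bool → Bool) (n : ℕ) (p : ℝ) : Prop :=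
  ∀ x : List Bool, x.length = n → ((n - (onlineOutput f x).length : ℕ) : ℝ) ≤ p * n

/-- `onGood p` : there is a rate `δ > 0` such that for every `ε > 0` there are
infinitely many `n` admitting a code `C ⊆ {0,1}^n` of size at least `2^{δn}` and a
decoder `Dec` into `C` such that every deterministic online deletion channel deleting
at most `pn` bits on every input miscommunicates at most `ε|C|` codewords. -/
def onGood (p : ℝ) : Prop :=
  ∃ δ : ℝ, 0 < δ ∧ ∀ ε : ℝ, 0 < ε → ∀ n₀ : ℕ, ∃ n ≥ n₀, ∃ C : Finset (List Bool),
    (∀ c ∈ C, c.length = n) ∧ (C.card : ℝ) ≥ 2 ^ (δ * n) ∧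
    ∃ Dec : List Bool → List Bool, (∀ s, Dec s ∈ C) ∧
      ∀ f : List Bool → Bool, deletesAtMost f n p →
        ((C.filter (fun c => Dec (onlineOutput f c) ≠ c)).card : ℝ) ≤ ε * C.card

/-- The deterministic zero-rate threshold for online deletions. -/
noncomputable def p0ond : ℝ := sSup {p : ℝ | p ∈ Set.Icc (0 : ℝ) 1 ∧ onGood p}

open Filter
open scoped Finset

/-! ### Online channels -/

theorem onlineOutput_congr {f g : List Bool → Bool} {x : List Bool}
    (h : ∀ i < x.length, f (x.take (i + 1)) = g (x.take (i + 1))) :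
    onlineOutput f x = onlineOutput g x :=
  List.filterMap_congr fun i hi => by rw [h i (List.mem_range.1 hi)]

theorem onlineOutput_nil (f : List Bool → Bool) : onlineOutput f [] = [] := rfl

theorem onlineOutput_cons (f : List Bool → Bool) (a : Bool) (x : List Bool) :
    onlineOutput f (a :: x) =
      (if f [a] then [a] else []) ++ onlineOutput (fun w => f (a :: w)) x := by
  unfold onlineOutput
  rw [List.length_cons, List.range_succ_eq_map, List.filterMap_cons, List.filterMap_map]
  cases h : f [a] <;> simp [h]

theorem onlineOutput_append (f : List Bool → Bool) (u v : List Bool) :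
    onlineOutput f (u ++ v) = onlineOutput f u ++ onlineOutput (fun w => f (u ++ w)) v := by
  induction u generalizing f with
  | nil => simp [onlineOutput_nil]
  | cons a u ih => simp only [List.cons_append, onlineOutput_cons, ih, List.append_assoc]

theorem onlineOutput_concat (f : List Bool → Bool) (x : List Bool) (a : Bool) :
    onlineOutput f (x ++ [a]) = onlineOutput f x ++ if f (x ++ [a]) then [a] else [] := by
  rw [onlineOutput_append, onlineOutput_cons, onlineOutput_nil, List.append_nil]

theorem onlineOutput_const_true (x : List Bool) : onlineOutput (fun _ => true) x = x := by
  induction x with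
  | nil => rfl
  | cons a x ih => simp [onlineOutput_cons, ih]

theorem onlineOutput_const_false (x : List Bool) : onlineOutput (fun _ => false) x = [] := by
  simp [onlineOutput]

theorem length_onlineOutput_le (f : List Bool → Bool) (x : List Bool) :
    (onlineOutput f x).length ≤ x.length :=
  (List.length_filterMap_le _ _).trans_eq List.length_range

/-- The channel that applies `f₁` to the first `m` bits and, once it has seen the prefix `u` of
length `m`, applies `f₂ u` to the remaining bits. -/
def twoPhase (m : ℕ) (f₁ : List Bool → Bool) (f₂ : List Bool → List Bool → Bool) :
    List Bool → Bool :=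
  fun w => if w.length ≤ m then f₁ w else f₂ (w.take m) (w.drop m)

theorem onlineOutput_twoPhase (m : ℕ) (f₁ : List Bool → Bool) (f₂ : List Bool → List Bool → Bool)
    (x : List Bool) :
    onlineOutput (twoPhase m f₁ f₂) x =
      onlineOutput f₁ (x.take m) ++ onlineOutput (f₂ (x.take m)) (x.drop m) := by
  conv_lhs => rw [← List.take_append_drop m x, onlineOutput_append]
  congr 1
  · refine onlineOutput_congr fun i _ => if_pos ?_
    simp only [List.length_take]
    omega
  · refine onlineOutput_congr fun i hi => ?_
    have hm : (x.take m).length = m := by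
      simp only [List.length_drop, List.length_take] at hi ⊢
      omega
    have hlong : ¬ (x.take m ++ (x.drop m).take (i + 1)).length ≤ m := by
      simp only [List.length_append, hm, List.length_take]
      omega
    simp only [twoPhase, if_neg hlong, List.take_left' hm, List.drop_left' hm]

theorem exists_onlineOutput_eq_of_sublist {x z : List Bool} (h : z.Sublist x) :
    ∃ f : List Bool → Bool, onlineOutput f x = z := by
  induction h with
  | slnil => exact ⟨fun _ => true, rfl⟩
  | cons a _ ih =>
    obtain ⟨f, hf⟩ := ih
    exact ⟨twoPhase 1 (fun _ => false) fun _ => f, by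
      simp [onlineOutput_twoPhase, onlineOutput_const_false, hf]⟩
  | cons_cons a _ ih =>
    obtain ⟨f, hf⟩ := ih
    exact ⟨twoPhase 1 (fun _ => true) fun _ => f, by
      simp [onlineOutput_twoPhase, onlineOutput_const_true, hf]⟩

/-- The channel that transmits the first `m` bits and deletes all others. -/
def truncation (m : ℕ) : List Bool → Bool :=
  twoPhase m (fun _ => true) fun _ _ => false

theorem onlineOutput_truncation (m : ℕ) (x : List Bool) :
    onlineOutput (truncation m) x = x.take m := by
  rw [truncation, onlineOutput_twoPhase, onlineOutput_const_true, onlineOutput_const_false,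
    List.append_nil]

theorem deletesAtMost_truncation {n : ℕ} {p : ℝ} (hp : 0 ≤ p) :
    deletesAtMost (truncation (n - ⌊p * n⌋₊)) n p := by
  intro x hx
  have hdel : n - (x.take (n - ⌊p * n⌋₊)).length ≤ ⌊p * n⌋₊ := by
    rw [List.length_take, hx]
    omega
  rw [onlineOutput_truncation]
  exact (Nat.cast_le.2 hdel).trans (Nat.floor_le (by positivity))

/-- The channel that transmits the first `h` occurrences of the bit `b` and deletes all other
bits. -/
def keepFirst (b : Bool) (h : ℕ) : List Bool → Bool :=
  fun w => w.getLast? = some b ∧ w.count b ≤ h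

theorem onlineOutput_keepFirst (b : Bool) (h : ℕ) (x : List Bool) :
    onlineOutput (keepFirst b h) x = List.replicate (min h (x.count b)) b := by
  induction x using List.reverseRecOn with
  | nil => simp [onlineOutput_nil]
  | append_singleton x a ih =>
    rw [onlineOutput_concat, ih]
    by_cases hab : a = b
    · subst hab
      rcases lt_or_ge (x.count a) h with hlt | hge
      · simp [keepFirst, min_eq_right hlt.le, List.replicate_succ', Nat.succ_le_of_lt hlt]
      · simp [keepFirst, hge, hge.trans (Nat.le_succ _)]
    · simp [keepFirst, hab]

/-! ### Enforcing a deletion budget -/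

/-- The number of bits of `x` deleted by the channel `f`. -/
def deletionCount (f : List Bool → Bool) (x : List Bool) : ℕ :=
  x.length - (onlineOutput f x).length

theorem deletionCount_add_length_onlineOutput (f : List Bool → Bool) (x : List Bool) :
    deletionCount f x + (onlineOutput f x).length = x.length :=
  Nat.sub_add_cancel (length_onlineOutput_le f x)

theorem deletionCount_concat (f : List Bool → Bool) (x : List Bool) (a : Bool) :
    deletionCount f (x ++ [a]) = deletionCount f x + if f (x ++ [a]) then 0 else 1 := by
  have hx := deletionCount_add_length_onlineOutput f x
  have hxa := deletionCount_add_length_onlineOutput f (x ++ [a])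
  rw [onlineOutput_concat, List.length_append, List.length_append, List.length_singleton] at hxa
  split_ifs at hxa ⊢ <;> simp only [List.length_singleton, List.length_nil] at hxa <;> omega

/-- The channel that follows `f` for the first `B` deletions of `f` and transmits everything
afterwards. It agrees with `f` on the inputs where `f` keeps to the budget `B`, and keeps to it on
all others. -/
def capDeletions (B : ℕ) (f : List Bool → Bool) : List Bool → Bool :=
  fun w => f w || decide (B < deletionCount f w)

theorem deletionCount_capDeletions (B : ℕ) (f : List Bool → Bool) (x : List Bool) :
    deletionCount (capDeletions B f) x = min B (deletionCount f x) := by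
  induction x using List.reverseRecOn with
  | nil => simp [deletionCount]
  | append_singleton x a ih =>
    rw [deletionCount_concat, ih, capDeletions, deletionCount_concat]
    cases f (x ++ [a])
    · simp only [Bool.false_or, decide_eq_true_eq, Bool.false_eq_true, if_false]
      split_ifs <;> omega
    · simp

theorem onlineOutput_capDeletions {B : ℕ} {f : List Bool → Bool} {x : List Bool}
    (h : deletionCount f x ≤ B) : onlineOutput (capDeletions B f) x = onlineOutput f x := by
  induction x using List.reverseRecOn with
  | nil => rfl
  | append_singleton x a ih =>
    have hx : deletionCount f x ≤ B := (Nat.le_add_right _ _).trans (deletionCount_concat f x a ▸ h)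
    rw [onlineOutput_concat, onlineOutput_concat, ih hx, capDeletions, decide_eq_false h.not_gt,
      Bool.or_false]

theorem deletesAtMost_capDeletions {n : ℕ} {p : ℝ} (hp : 0 ≤ p) (f : List Bool → Bool) :
    deletesAtMost (capDeletions ⌊p * n⌋₊ f) n p := by
  rintro x rfl
  have hcap : deletionCount (capDeletions ⌊p * x.length⌋₊ f) x ≤ ⌊p * x.length⌋₊ :=
    (deletionCount_capDeletions _ f x).trans_le (min_le_left _ _)
  exact (Nat.cast_le.2 hcap).trans (Nat.floor_le (by positivity))

/-! ### Counting -/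

section Counting

variable {α β : Type*}

theorem card_le_card_filter_ne_add_card_image [DecidableEq α] [DecidableEq β] (f : α → β)
    (g : β → α) (C : Finset α) :
    #C ≤ #{c ∈ C | g (f c) ≠ c} + #(C.image f) := by
  have hinj : #{c ∈ C | ¬ g (f c) ≠ c} ≤ #(C.image f) := by
    refine Finset.card_le_card_of_injOn f ?_ ?_
    · exact fun c hc => Finset.mem_image_of_mem f (Finset.mem_filter.1 hc).1
    · refine Set.LeftInvOn.injOn (f₁' := g) fun c hc => ?_
      exact not_not.1 (Finset.mem_filter.1 hc).2
  rw [← Finset.card_filter_add_card_filter_not (s := C) fun c => g (f c) ≠ c]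
  omega

theorem card_image_add_card_le_of_subset [DecidableEq β] (f : α → β) {P C : Finset α}
    (h : P ⊆ C) :
    #(C.image f) + #P ≤ #(P.image f) + #C := by
  classical
  have himg : #(C.image f) ≤ #((C \ P).image f) + #(P.image f) := by
    conv_lhs => rw [← Finset.sdiff_union_of_subset h, Finset.image_union]
    exact Finset.card_union_le _ _
  have hle : #((C \ P).image f) ≤ #(C \ P) := Finset.card_image_le
  have hcard := Finset.card_sdiff_add_card_eq_card h
  omega

/-- Two distinct points of `S` have a common label, where `A x z` means that `z` may serve as a
label of `x`. The labels of a codeword will be the long subsequences of its suffix. -/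
def HasCommonLabel (A : α → β → Prop) (S : Finset α) : Prop :=
  ∃ x ∈ S, ∃ y ∈ S, x ≠ y ∧ ∃ z, A x z ∧ A y z

/-- The points of `P` can be labelled with at most half as many labels as points, where `A x z`
means that `z` may serve as a label of `x`. Pairs of points with a common label give such a set. -/
def HasHalfLabelling (A : α → β → Prop) (P : Finset α) : Prop :=
  ∃ Z : Finset β, 2 * #Z ≤ #P ∧ ∀ x ∈ P, ∃ z ∈ Z, A x z

theorem HasCommonLabel.of_image {γ : Type*} [DecidableEq α] {A : α → β → Prop} {g : γ → α}
    {S : Finset γ} (h : HasCommonLabel A (S.image g)) : HasCommonLabel (fun x => A (g x)) S := by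
  obtain ⟨_, hx, _, hy, hxy, hlabel⟩ := h
  obtain ⟨x, hxS, rfl⟩ := Finset.mem_image.1 hx
  obtain ⟨y, hyS, rfl⟩ := Finset.mem_image.1 hy
  exact ⟨x, hxS, y, hyS, ne_of_apply_ne g hxy, hlabel⟩

theorem hasCommonLabel_of_not_injOn {γ : Type*} {A : α → β → Prop} {g : γ → α} {S : Finset γ}
    (hg : ¬ Set.InjOn g S) (hA : ∀ x ∈ S, ∃ z, A (g x) z) :
    HasCommonLabel (fun x => A (g x)) S := by
  simp only [Set.InjOn, Finset.mem_coe] at hg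
  push Not at hg
  obtain ⟨x, hx, y, hy, hxy, hne⟩ := hg
  obtain ⟨z, hz⟩ := hA x hx
  exact ⟨x, hx, y, hy, hne, z, hz, by simpa only [← hxy] using hz⟩

theorem HasHalfLabelling.insert_insert [DecidableEq α] {A : α → β → Prop} {P : Finset α}
    (hP : HasHalfLabelling A P) {x y : α} (hx : x ∉ P) (hy : y ∉ P) (hxy : x ≠ y) {w : β}
    (hxw : A x w) (hyw : A y w) : HasHalfLabelling A (insert x (insert y P)) := by
  obtain ⟨Z, hZ, hlabel⟩ := hP
  classical
  refine ⟨insert w Z, ?_, ?_⟩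
  · have hZ' : #(insert w Z) ≤ #Z + 1 := Finset.card_insert_le w Z
    have hP' : #(insert x (insert y P)) = #P + 2 := by
      rw [Finset.card_insert_of_notMem (by simp [hxy, hx]), Finset.card_insert_of_notMem hy]
    omega
  · simp only [Finset.forall_mem_insert, Finset.exists_mem_insert]
    exact ⟨.inl hxw, .inl hyw, fun c hc => .inr (hlabel c hc)⟩

theorem exists_hasHalfLabelling_not_hasCommonLabel_sdiff [DecidableEq α] (A : α → β → Prop)
    (S : Finset α) :
    ∃ P ⊆ S, HasHalfLabelling A P ∧ ¬ HasCommonLabel A (S \ P) := by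
  have hempty : HasHalfLabelling A (∅ : Finset α) := ⟨∅, by simp⟩
  obtain ⟨P, hP, hmax⟩ := ({P ∈ S.powerset | HasHalfLabelling A P}).exists_maximal
    ⟨∅, by simpa using hempty⟩
  obtain ⟨hPS, hhalf⟩ := Finset.mem_filter.1 hP
  rw [Finset.mem_powerset] at hPS
  refine ⟨P, hPS, hhalf, ?_⟩
  rintro ⟨x, hx, y, hy, hxy, w, hxw, hyw⟩
  rw [Finset.mem_sdiff] at hx hy
  have hbigger : insert x (insert y P) ∈ {P ∈ S.powerset | HasHalfLabelling A P} :=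
    Finset.mem_filter.2 ⟨by simp [Finset.insert_subset_iff, hx.1, hy.1, hPS],
      hhalf.insert_insert hx.2 hy.2 hxy hxw hyw⟩
  have hsub : P ⊆ insert x (insert y P) := fun c hc => by simp [hc]
  exact hx.2 (hmax hbigger hsub (Finset.mem_insert_self _ _))

theorem card_image_take_zero_le_one [DecidableEq α] (C : Finset (List α)) :
    #(C.image (List.take 0)) ≤ 1 :=
  Finset.card_le_one.2 <| by simp +contextual

theorem exists_card_le_two_mul_card_filter {r : Bool → α → Prop} [∀ b, DecidablePred (r b)]
    {S : Finset α} (h : ∀ x ∈ S, ∃ b, r b x) : ∃ b, #S ≤ 2 * #{x ∈ S | r b x} := by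
  classical
  have hcover : S ⊆ Finset.univ.biUnion fun b => {x ∈ S | r b x} := by
    intro x hx
    simpa [hx, or_comm] using h x hx
  have hsum := (Finset.card_le_card hcover).trans Finset.card_biUnion_le
  by_contra! hsmall
  rw [Fintype.sum_bool] at hsum
  linarith [hsmall true, hsmall false]

end Counting

/-! ### Common subsequences above the threshold -/

/-- `z` is a subsequence of `x` of length at least `L`. The bound is real because the definition of
`p0adv` compares lengths with `(1 - p) * n`. -/
def IsSubseqOfLengthGE {α : Type*} (L : ℝ) (x z : List α) : Prop :=
  z.Sublist x ∧ L ≤ z.length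

theorem p0adv_nonneg : 0 ≤ p0adv := Real.sSup_nonneg fun _ h => h.1.1

theorem p0adv_le_one : p0adv ≤ 1 := Real.sSup_le (fun _ h => h.1.2) zero_le_one

theorem tendsto_rpow_mul_natCast_atTop {b c : ℝ} (hb : 1 < b) (hc : 0 < c) :
    Tendsto (fun n : ℕ => b ^ (c * n)) atTop atTop := by
  simpa only [Real.rpow_mul_natCast (zero_le_one.trans hb.le)] using
    tendsto_pow_atTop_atTop_of_one_lt (Real.one_lt_rpow hb hc)

theorem eventually_mul_rpow_mul_natCast_le {b r R : ℝ} (hb : 1 < b) (hr : r < R) (M : ℝ) :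
    ∀ᶠ n : ℕ in atTop, M * b ^ (r * n) ≤ b ^ (R * n) := by
  have hb0 : 0 < b := zero_lt_one.trans hb
  filter_upwards [(tendsto_rpow_mul_natCast_atTop hb (sub_pos.2 hr)).eventually_ge_atTop M]
    with n hn
  calc M * b ^ (r * n) ≤ b ^ ((R - r) * n) * b ^ (r * n) := by gcongr
    _ = b ^ (R * n) := by rw [← Real.rpow_add hb0, ← add_mul, sub_add_cancel]

theorem eventually_hasCommonLabel_of_p0adv_lt {q δ : ℝ} (hq : p0adv < q) (hδ : 0 < δ) :
    ∀ᶠ n : ℕ in atTop, ∀ C : Finset (List Bool), (∀ c ∈ C, c.length = n) →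
      (2 : ℝ) ^ (δ * n) ≤ #C → HasCommonLabel (IsSubseqOfLengthGE ((1 - q) * n)) C := by
  rcases le_or_gt q 1 with hq1 | hq1
  · have hbad : ¬ advGood q := fun hgood =>
      hq.not_ge (le_csSup ⟨1, fun _ h => h.1.2⟩ ⟨⟨p0adv_nonneg.trans hq.le, hq1⟩, hgood⟩)
    unfold advGood at hbad
    push Not at hbad
    obtain ⟨n₀, hn₀⟩ := hbad δ hδ
    filter_upwards [eventually_ge_atTop n₀] with n hn C hC hcard
    obtain ⟨x, hx, y, hy, hxy, z, hzx, hzy, hz⟩ := hn₀ n hn C hC hcard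
    exact ⟨x, hx, y, hy, hxy, z, ⟨hzx, hz⟩, ⟨hzy, hz⟩⟩
  · filter_upwards [(tendsto_rpow_mul_natCast_atTop one_lt_two hδ).eventually_gt_atTop 1]
      with n hn C _ hcard
    have hone : 1 < #C := by exact_mod_cast hn.trans_le hcard
    obtain ⟨x, hx, y, hy, hxy⟩ := Finset.one_lt_card.1 hone
    have hlen : (1 - q) * n ≤ ([] : List Bool).length := by
      simpa using mul_nonpos_of_nonpos_of_nonneg (by linarith) n.cast_nonneg
    exact ⟨x, hx, y, hy, hxy, [], ⟨List.nil_sublist x, hlen⟩, ⟨List.nil_sublist y, hlen⟩⟩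

theorem eventually_hasCommonLabel_drop {q δ : ℝ} (hq : p0adv < q) (hδ : 0 < δ) :
    ∀ᶠ s : ℕ in atTop, ∀ (m : ℕ) (S : Finset (List Bool)), (∀ x ∈ S, x.length = m + s) →
      (2 : ℝ) ^ (δ * s) ≤ #S →
        HasCommonLabel (fun x => IsSubseqOfLengthGE ((1 - q) * s) (x.drop m)) S := by
  filter_upwards [eventually_hasCommonLabel_of_p0adv_lt hq hδ] with s hs m S hS hcard
  have hdrop : ∀ x ∈ S, (x.drop m).length = s := fun x hx => by simp [hS x hx]
  by_cases hinj : Set.InjOn (List.drop m) (S : Set (List Bool))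
  · refine (hs _ (Finset.forall_mem_image.2 hdrop) ?_).of_image
    rwa [Finset.card_image_of_injOn hinj]
  · refine hasCommonLabel_of_not_injOn hinj fun x hx => ⟨x.drop m, List.Sublist.refl _, ?_⟩
    rw [hdrop x hx]
    nlinarith [p0adv_nonneg, s.cast_nonneg (α := ℝ)]

/-! ### The majority attack -/

theorem exists_length_le_two_mul_count (u : List Bool) : ∃ b, u.length ≤ 2 * u.count b := by
  have hsum := List.count_true_add_count_false u
  by_contra! hlt
  linarith [hlt true, hlt false]

theorem exists_deletesAtMost_card_image_le {n m h : ℕ} {p L : ℝ} (hp : 0 ≤ p) {b : Bool}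
    {P Z : Finset (List Bool)} (hlen : ∀ x ∈ P, x.length = n)
    (hinj : Set.InjOn (List.take m) (P : Set (List Bool)))
    (hcount : ∀ x ∈ P, h ≤ (x.take m).count b)
    (hZ : ∀ x ∈ P, ∃ z ∈ Z, IsSubseqOfLengthGE L (x.drop m) z)
    (hbudget : n ≤ h + L + p * n) :
    ∃ f, deletesAtMost f n p ∧ #(P.image (onlineOutput f)) ≤ #Z := by
  choose! z hzZ hz using hZ
  choose! g hg using fun x hx => exists_onlineOutput_eq_of_sublist (hz x hx).1
  let codeword : List Bool → List Bool := Function.invFunOn (List.take m) P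
  have hcodeword : ∀ x ∈ P, codeword (x.take m) = x := hinj.leftInvOn_invFunOn
  let f : List Bool → Bool := twoPhase m (keepFirst b h) fun u => g (codeword u)
  have hf : ∀ x ∈ P, onlineOutput f x = List.replicate h b ++ z x := fun x hx => by
    rw [onlineOutput_twoPhase, onlineOutput_keepFirst, min_eq_left (hcount x hx),
      hcodeword x hx, hg x hx]
  have hcap : ∀ x ∈ P, onlineOutput (capDeletions ⌊p * n⌋₊ f) x = List.replicate h b ++ z x := by
    intro x hx
    rw [← hf x hx]
    refine onlineOutput_capDeletions (Nat.le_floor ?_)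
    have hlength := deletionCount_add_length_onlineOutput f x
    rw [hf x hx, hlen x hx, List.length_append, List.length_replicate] at hlength
    have hlength' : (deletionCount f x + (h + (z x).length) : ℝ) = n := by exact_mod_cast hlength
    linarith [(hz x hx).2]
  refine ⟨capDeletions ⌊p * n⌋₊ f, deletesAtMost_capDeletions hp f, ?_⟩
  calc #(P.image (onlineOutput (capDeletions ⌊p * n⌋₊ f)))
      ≤ #(Z.image (List.replicate h b ++ ·)) :=
        Finset.card_le_card <| Finset.image_subset_iff.2 fun x hx =>
          hcap x hx ▸ Finset.mem_image_of_mem _ (hzZ x hx)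
    _ ≤ #Z := Finset.card_image_le

theorem exists_deletesAtMost_four_mul_card_image_le {n m : ℕ} {p L K : ℝ} (hp : 0 ≤ p)
    (hmn : m ≤ n) {C : Finset (List Bool)} (hC : ∀ c ∈ C, c.length = n)
    (hpair : ∀ S ⊆ C, K ≤ #S → HasCommonLabel (fun x => IsSubseqOfLengthGE L (x.drop m)) S)
    (hbudget : n ≤ m / 2 + L + p * n) :
    ∃ f, deletesAtMost f n p ∧
      4 * (#(C.image (onlineOutput f)) : ℝ) + #(C.image (List.take m)) ≤ 4 * #C + 2 * K := by
  obtain ⟨U, hUC, hinj, hU⟩ : ∃ U ⊆ C, Set.InjOn (List.take m) (U : Set (List Bool)) ∧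
      U.image (List.take m) = C.image (List.take m) := by
    simpa using Finset.exists_subset_injOn_image_eq_of_surjOn (f := List.take m) (C : Set _)
      (C.image (List.take m)) (by simp [Set.SurjOn])
  have hmajority : ∀ x ∈ U, ∃ b, (m + 1) / 2 ≤ (x.take m).count b := by
    intro x hx
    obtain ⟨b, hb⟩ := exists_length_le_two_mul_count (x.take m)
    rw [List.length_take, hC x (hUC hx), min_eq_left hmn] at hb
    exact ⟨b, by omega⟩
  obtain ⟨b, hb⟩ := exists_card_le_two_mul_card_filter hmajority
  set S := {x ∈ U | (m + 1) / 2 ≤ (x.take m).count b}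
  have hSU : S ⊆ U := Finset.filter_subset _ _
  obtain ⟨P, hPS, ⟨Z, hZ, hlabel⟩, hrest⟩ := exists_hasHalfLabelling_not_hasCommonLabel_sdiff
    (fun x => IsSubseqOfLengthGE L (x.drop m)) S
  have hPC : P ⊆ C := hPS.trans (hSU.trans hUC)
  have hrestK : (#(S \ P) : ℝ) < K :=
    lt_of_not_ge fun hK => hrest (hpair _ (Finset.sdiff_subset.trans (hSU.trans hUC)) hK)
  have hhalf : (m : ℝ) / 2 ≤ ((m + 1) / 2 : ℕ) := by
    rw [div_le_iff₀ two_pos]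
    exact_mod_cast (by omega : m ≤ (m + 1) / 2 * 2)
  obtain ⟨f, hf, himg⟩ := exists_deletesAtMost_card_image_le hp (fun x hx => hC x (hPC hx))
    (hinj.mono (hPS.trans hSU)) (fun x hx => (Finset.mem_filter.1 (hPS hx)).2) hlabel
    (by linarith)
  refine ⟨f, hf, ?_⟩
  have hloss := card_image_add_card_le_of_subset (onlineOutput f) hPC
  have hsplit := Finset.card_sdiff_add_card_eq_card hPS
  have hUcard : #(C.image (List.take m)) = #U := by rw [← hU, Finset.card_image_of_injOn hinj]
  have hcount : 4 * #(C.image (onlineOutput f)) + #(C.image (List.take m)) ≤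
      4 * #C + 2 * #(S \ P) := by omega
  have hcount' : 4 * (#(C.image (onlineOutput f)) : ℝ) + #(C.image (List.take m)) ≤
      4 * #C + 2 * #(S \ P) := by exact_mod_cast hcount
  linarith

theorem exists_p0adv_lt_and_one_lt_mul {p : ℝ} (hp : 1 / (3 - 2 * p0adv) < p) :
    ∃ q, p0adv < q ∧ 1 < p * (3 - 2 * q) := by
  have hpos : 0 < 3 - 2 * p0adv := by linarith [p0adv_le_one]
  have hp0 : 0 < p := (one_div_pos.2 hpos).trans hp
  rw [div_lt_iff₀ hpos] at hp
  have hlt : p0adv < (3 - 1 / p) / 2 := by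
    have hinv : 1 / p < 3 - 2 * p0adv := by rwa [div_lt_iff₀' hp0]
    linarith
  obtain ⟨q, hq, hqlt⟩ := exists_between hlt
  refine ⟨q, hq, ?_⟩
  rw [← div_lt_iff₀' hp0]
  linarith

theorem deletion_budget {p q n s m : ℝ} (hq : 0 ≤ q) (hm : m + s = n) (hs : s ≤ p * n)
    (hs' : p * n < s + 1) (hn : 1 ≤ (p * (3 - 2 * q) - 1) * n) :
    n ≤ m / 2 + (1 - q) * s + p * n := by
  have hqs : q * s ≤ q * (p * n) := mul_le_mul_of_nonneg_left hs hq
  linarith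

theorem eventually_exists_deletesAtMost_card_image_le {p R ε : ℝ}
    (hp : 1 / (3 - 2 * p0adv) < p) (hR : 0 < R) (hε : ε < 1 / 5) :
    ∀ᶠ n : ℕ in atTop, ∀ C : Finset (List Bool), (∀ c ∈ C, c.length = n) →
      (2 : ℝ) ^ (R * n) ≤ #C →
        ∃ f, deletesAtMost f n p ∧ #(C.image (onlineOutput f)) ≤ (1 - ε) * #C := by
  obtain ⟨q, hq, hpq⟩ := exists_p0adv_lt_and_one_lt_mul hp
  have hp0 : 0 < p := (one_div_pos.2 (by linarith [p0adv_le_one])).trans hp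
  have hfloor : Tendsto (fun n : ℕ => ⌊p * n⌋₊) atTop atTop :=
    tendsto_nat_floor_atTop.comp (tendsto_natCast_atTop_atTop.const_mul_atTop hp0)
  filter_upwards [hfloor.eventually (eventually_hasCommonLabel_drop hq (half_pos hR)),
    (tendsto_natCast_atTop_atTop.const_mul_atTop (sub_pos.2 hpq)).eventually_ge_atTop 1,
    (tendsto_rpow_mul_natCast_atTop one_lt_two hR).eventually_ge_atTop 2,
    eventually_mul_rpow_mul_natCast_le one_lt_two (half_lt_self hR) (2 / (1 - 5 * ε))]
    with n hsuffix hn htwo hlarge C hC hcard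
  set s := ⌊p * n⌋₊
  by_cases hfew : (#(C.image (List.take (n - s))) : ℝ) ≤ (1 - ε) * #C
  · refine ⟨truncation (n - s), deletesAtMost_truncation hp0.le, ?_⟩
    rwa [funext (onlineOutput_truncation (n - s))]
  rw [not_le] at hfew
  have hsn : s ≤ n := by
    by_contra! hns
    have hone : (#(C.image (List.take (n - s))) : ℝ) ≤ 1 := by
      rw [Nat.sub_eq_zero_of_le hns.le]
      exact_mod_cast card_image_take_zero_le_one C
    nlinarith
  have hK : 2 * (2 : ℝ) ^ (R / 2 * s) ≤ (1 - 5 * ε) * #C := by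
    have hε' : 0 < 1 - 5 * ε := by linarith
    rw [div_mul_eq_mul_div, div_le_iff₀' hε'] at hlarge
    calc 2 * (2 : ℝ) ^ (R / 2 * s) ≤ 2 * 2 ^ (R / 2 * n) := by gcongr; norm_num
      _ ≤ (1 - 5 * ε) * 2 ^ (R * n) := hlarge
      _ ≤ (1 - 5 * ε) * #C := by gcongr
  obtain ⟨f, hf, himg⟩ := exists_deletesAtMost_four_mul_card_image_le (m := n - s) hp0.le
    (Nat.sub_le n s) hC
    (fun S hS => hsuffix (n - s) S fun x hx => by rw [hC x (hS hx), Nat.sub_add_cancel hsn])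
    (deletion_budget (p0adv_nonneg.trans hq.le) (by exact_mod_cast Nat.sub_add_cancel hsn)
      (Nat.floor_le (by positivity)) (Nat.lt_floor_add_one _) hn)
  exact ⟨f, hf, by linarith⟩

/-- For every `p > 1/(3 − 2·p0_adv)` and `R > 0`, for all sufficiently large `n` and
every code `C ⊆ {0,1}^n` with `|C| ≥ 2^{Rn}`, there is a deterministic online deletion
channel deleting at most `pn` bits on every input such that every decoder into `C`
misdecodes at least `|C|/10` codewords. -/
theorem online_channel_defeats_large_codes (p R : ℝ)
    (hp : p > 1 / (3 - 2 * p0adv)) (hR : 0 < R) :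
    ∃ n₀ : ℕ, ∀ n ≥ n₀, ∀ C : Finset (List Bool), (∀ c ∈ C, c.length = n) →
      (C.card : ℝ) ≥ 2 ^ (R * n) →
      ∃ f : List Bool → Bool, deletesAtMost f n p ∧
        ∀ Dec : List Bool → List Bool, (∀ s, Dec s ∈ C) →
          ((C.filter (fun c => Dec (onlineOutput f c) ≠ c)).card : ℝ) ≥ C.card / 10 := by
  obtain ⟨n₀, hn₀⟩ := eventually_atTop.1 <|
    eventually_exists_deletesAtMost_card_image_le hp hR (ε := 1 / 10) (by norm_num)
  refine ⟨n₀, fun n hn C hC hcard => ?_⟩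
  obtain ⟨f, hf, himg⟩ := hn₀ n hn C hC hcard
  refine ⟨f, hf, fun Dec _ => ?_⟩
  have hcount : (#C : ℝ) ≤ #{c ∈ C | Dec (onlineOutput f c) ≠ c} + #(C.image (onlineOutput f)) := by
    exact_mod_cast card_le_card_filter_ne_add_card_image (onlineOutput f) Dec C
  linarith
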